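/- arXiv:2602.08423 — 5 statements merged into one kernel-verified Lean document; each statement's English description precedes it below -/
import Mathlib

section
/- Correctness of the 1G (one-variable greater-than) SAT encoding: let G be a finite simple graph on vertex set V with symmetric positive integer edge weights d, and let k ≥ 1 be an integer. The following are equivalent: (i) there exists a valid coloring with span bound k; (ii) there exists a map y : V → ℤ → Bool satisfying all of: (boundary) y(u,j) = true for every vertex u and every integer j ≤ 1, and y(u,j) = false for every j > k; (ordering) for every vertex u and every integer j, y(u,j) implies y(u,j−1); (distance) for every ordered pair (u,v) of adjacent vertices and every integer j with 1 ≤ j ≤ k, y(u,j) implies y(u,j+1) ∨ ¬y(v, j−d(u,v)+1) ∨ y(v, j+d(u,v)). Moreover, from any such y a valid coloring is obtained by setting c(u) equal to the largest j with y(u,j) = true. -/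
/-- A valid coloring of a BCP instance `(G, d)` with span bound `k`:
every vertex gets a color in `[1, k]`, and adjacent vertices `u, v`
satisfy the distance constraint `|c u - c v| ≥ d u v`. -/
def ValidColoring {V : Type*} (G : SimpleGraph V) (d : V → V → ℤ) (k : ℤ)
    (c : V → ℤ) : Prop :=
  (∀ v, 1 ≤ c v ∧ c v ≤ k) ∧ ∀ u v, G.Adj u v → |c u - c v| ≥ d u v

/-- The constraints of the 1G (one-variable greater-than) encoding with
span bound `k`: boundary, ordering, and distance clauses. -/
def OneG {V : Type*} (G : SimpleGraph V) (d : V → V → ℤ) (k : ℤ)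
    (y : V → ℤ → Bool) : Prop :=
  (∀ u : V, ∀ j : ℤ, j ≤ 1 → y u j = true) ∧
  (∀ u : V, ∀ j : ℤ, k < j → y u j = false) ∧
  (∀ u : V, ∀ j : ℤ, y u j = true → y u (j - 1) = true) ∧
  (∀ u v : V, G.Adj u v → ∀ j : ℤ, 1 ≤ j → j ≤ k →
    y u j = true →
      (y u (j + 1) = true ∨ y v (j - d u v + 1) = false ∨ y v (j + d u v) = true))

/-!
The boundary and ordering clauses force `y u` to be the indicator of the ray `j ≤ c u`, where `c u`
is the largest `j` with `y u j = true`. For such indicators the distance clause at `j` has content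
only for `j = c u`, since `j < c u` gives `y u (j + 1) = true`; at `j = c u` it reads
`c v ≤ c u - d u v ∨ c u + d u v ≤ c v`, which is `d u v ≤ |c u - c v|`.
-/

theorem mem_iff_le_of_isGreatest {α : Type*} [Preorder α] [PredOrder α] [IsPredArchimedean α]
    {s : Set α} {m a : α} (hpred : ∀ b ∈ s, Order.pred b ∈ s) (hm : IsGreatest s m) :
    a ∈ s ↔ a ≤ m :=
  ⟨fun ha => hm.2 ha, fun ha => Pred.rec (P := fun b _ => b ∈ s) hm.1 (fun b _ => hpred b) ha⟩

theorem forall_distance_clause_iff_le_abs_sub {k a b δ : ℤ} (ha : 1 ≤ a) (hak : a ≤ k) :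
    (∀ j, 1 ≤ j → j ≤ k → j ≤ a → j + 1 ≤ a ∨ b < j - δ + 1 ∨ j + δ ≤ b) ↔ δ ≤ |a - b| := by
  rw [le_abs]
  constructor
  · intro h
    have clause_at_a := h a ha hak le_rfl
    omega
  · intro h j _ _ hj
    omega

section Encoding

variable {V : Type*} {G : SimpleGraph V} {d : V → V → ℤ} {k : ℤ} {y : V → ℤ → Bool} {c : V → ℤ}

theorem oneG_iff_validColoring (hy : ∀ u j, y u j = true ↔ j ≤ c u) :
    OneG G d k y ↔ ValidColoring G d k c := by
  have hy_false : ∀ u j, y u j = false ↔ c u < j := fun u j => by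
    rw [← Bool.not_eq_true, hy, not_le]
  simp only [OneG, ValidColoring, hy, hy_false]
  constructor
  · rintro ⟨hlow, hhigh, -, hdist⟩
    have hrange : ∀ u, 1 ≤ c u ∧ c u ≤ k := fun u =>
      ⟨hlow u 1 le_rfl, le_of_not_gt fun hu => (hhigh u (c u) hu).false⟩
    exact ⟨hrange, fun u v huv =>
      (forall_distance_clause_iff_le_abs_sub (hrange u).1 (hrange u).2).1 (hdist u v huv)⟩
  · rintro ⟨hrange, hdist⟩
    exact ⟨fun u j hj => hj.trans (hrange u).1, fun u j hj => (hrange u).2.trans_lt hj,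
      fun u j hj => (sub_one_lt j).le.trans hj, fun u v huv =>
        (forall_distance_clause_iff_le_abs_sub (hrange u).1 (hrange u).2).2 (hdist u v huv)⟩

theorem OneG.eq_true_iff_le (hy : OneG G d k y) {u : V} {m : ℤ}
    (hm : IsGreatest {j | y u j = true} m) (j : ℤ) : y u j = true ↔ j ≤ m :=
  mem_iff_le_of_isGreatest (fun i hi => hy.2.2.1 u i hi) hm

theorem OneG.exists_isGreatest (hy : OneG G d k y) (u : V) :
    ∃ m, IsGreatest {j | y u j = true} m := by
  obtain ⟨hlow, hhigh, -, -⟩ := hy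
  have hne : {j | y u j = true}.Nonempty := ⟨1, hlow u 1 le_rfl⟩
  have hbdd : BddAbove {j | y u j = true} :=
    ⟨k, fun j hj => le_of_not_gt fun hkj => Bool.false_ne_true ((hhigh u j hkj).symm.trans hj)⟩
  exact hbdd.exists_isGreatest_of_nonempty hne

theorem OneG.validColoring (hy : OneG G d k y)
    (hc : ∀ u, IsGreatest {j | y u j = true} (c u)) : ValidColoring G d k c :=
  (oneG_iff_validColoring fun u => hy.eq_true_iff_le (hc u)).1 hy

theorem ValidColoring.oneG (hc : ValidColoring G d k c) :
    OneG G d k fun u j => decide (j ≤ c u) :=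
  (oneG_iff_validColoring fun _ _ => decide_eq_true_iff).2 hc

end Encoding

theorem correctness_1G_encoding_general {V : Type*} (G : SimpleGraph V) (d : V → V → ℤ) (k : ℤ) :
    ((∃ c : V → ℤ, ValidColoring G d k c) ↔ ∃ y : V → ℤ → Bool, OneG G d k y) ∧
    (∀ y : V → ℤ → Bool, OneG G d k y →
      ∀ c : V → ℤ, (∀ u : V, IsGreatest {j : ℤ | y u j = true} (c u)) →
        ValidColoring G d k c) := by
  refine ⟨⟨fun ⟨_, hc⟩ => ⟨_, hc.oneG⟩, fun ⟨y, hy⟩ => ?_⟩, fun _ hy _ hc => hy.validColoring hc⟩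
  choose c hc using hy.exists_isGreatest
  exact ⟨c, hy.validColoring hc⟩

theorem correctness_1G_encoding {V : Type*} [Fintype V]
    (G : SimpleGraph V) (d : V → V → ℤ)
    (hdpos : ∀ u v, G.Adj u v → 1 ≤ d u v)
    (hdsymm : ∀ u v, d u v = d v u)
    (k : ℤ) (hk : 1 ≤ k) :
    ((∃ c : V → ℤ, ValidColoring G d k c) ↔ ∃ y : V → ℤ → Bool, OneG G d k y) ∧
    (∀ y : V → ℤ → Bool, OneG G d k y →
      ∀ c : V → ℤ, (∀ u : V, IsGreatest {j : ℤ | y u j = true} (c u)) →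
        ValidColoring G d k c) :=
  correctness_1G_encoding_general G d k
end

section
/- Correctness of the 2G (two-variable greater-than) SAT encoding: let G be a finite simple graph on vertex set V with symmetric positive integer edge weights d, and let k ≥ 1 be an integer. The following are equivalent: (i) there exists a valid coloring with span bound k; (ii) there exist maps x, y : V → ℤ → Bool satisfying all of: (boundary) y(u,j) = true for every vertex u and every integer j ≤ 1, and y(u,j) = false for every j > k; (ordering) for every vertex u and every integer j, y(u,j) implies y(u,j−1); (channeling) for every vertex u and every integer j with 1 ≤ j ≤ k, x(u,j) holds if and only if y(u,j) ∧ ¬y(u,j+1); (distance) for every ordered pair (u,v) of adjacent vertices and every integer j with 1 ≤ j ≤ k, x(u,j) implies ¬y(v, j−d(u,v)+1) ∨ y(v, j+d(u,v)). Moreover, from any such (x,y) a valid coloring is obtained by setting c(u) equal to the unique j in [1,k] with x(u,j) = true. -/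
/-- The constraints of the 2G (two-variable greater-than) encoding with
span bound `k`: boundary, ordering, channeling, and distance clauses. -/
def TwoG {V : Type*} (G : SimpleGraph V) (d : V → V → ℤ) (k : ℤ)
    (x y : V → ℤ → Bool) : Prop :=
  (∀ u : V, ∀ j : ℤ, j ≤ 1 → y u j = true) ∧
  (∀ u : V, ∀ j : ℤ, k < j → y u j = false) ∧
  (∀ u : V, ∀ j : ℤ, y u j = true → y u (j - 1) = true) ∧
  (∀ u : V, ∀ j : ℤ, 1 ≤ j → j ≤ k →
    (x u j = true ↔ (y u j = true ∧ y u (j + 1) = false))) ∧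
  (∀ u v : V, G.Adj u v → ∀ j : ℤ, 1 ≤ j → j ≤ k →
    x u j = true →
      (y v (j - d u v + 1) = false ∨ y v (j + d u v) = true))

/-!
The `y`-clauses alone force each `y u` to be the indicator of a ray `j ≤ c u`, and channeling then
makes `x u` the indicator of `c u` on `[1, k]`. Rewriting every remaining clause through these two
descriptions turns the 2G constraints into the assertion that `c` is a valid coloring.
-/

theorem exists_eq_Iic_of_isLowerSet {α : Type*} [LinearOrder α] [SuccOrder α]
    [IsSuccArchimedean α] {s : Set α} (hs : IsLowerSet s) (hne : s.Nonempty) (hbdd : BddAbove s) :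
    ∃ a, s = Set.Iic a := by
  obtain ⟨a, ha, ha_max⟩ := hbdd.exists_isGreatest_of_nonempty hne
  exact ⟨a, Set.Subset.antisymm ha_max (hs.Iic_subset ha)⟩

/-- The Boolean variables `x`, `y` represent the integer assignment `c` in the sense of the 2G
encoding: `y u j` says `c u ≥ j`, and `x u j` says `c u = j`. The latter is only required for
`1 ≤ j ≤ k`, since no clause mentions `x u j` for other `j`. -/
structure Represents {V : Type*} (k : ℤ) (x y : V → ℤ → Bool) (c : V → ℤ) : Prop where
  y_iff : ∀ u j, y u j = true ↔ j ≤ c u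
  x_iff : ∀ u j, 1 ≤ j → j ≤ k → (x u j = true ↔ j = c u)

section

variable {V : Type*} {G : SimpleGraph V} {d : V → V → ℤ} {k : ℤ} {x y : V → ℤ → Bool} {c : V → ℤ}

namespace Represents

theorem of_decide (k : ℤ) (c : V → ℤ) :
    Represents k (fun u j => decide (j = c u)) (fun u j => decide (j ≤ c u)) c where
  y_iff _ _ := decide_eq_true_iff
  x_iff _ _ _ _ := decide_eq_true_iff

theorem y_eq_false_iff (h : Represents k x y c) (u : V) (j : ℤ) : y u j = false ↔ c u < j := by
  rw [← Bool.not_eq_true, h.y_iff, not_le]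

theorem distance_clause_iff (h : Represents k x y c) (v : V) (j δ : ℤ) :
    (y v (j - δ + 1) = false ∨ y v (j + δ) = true) ↔ |j - c v| ≥ δ := by
  rw [h.y_eq_false_iff, h.y_iff, ge_iff_le, le_abs]
  omega

theorem channeling_clause (h : Represents k x y c) (u : V) (j : ℤ) (hj : 1 ≤ j) (hjk : j ≤ k) :
    x u j = true ↔ y u j = true ∧ y u (j + 1) = false := by
  rw [h.x_iff u j hj hjk, h.y_iff, h.y_eq_false_iff]
  omega

theorem validColoring (h : Represents k x y c) (hxy : TwoG G d k x y) :
    ValidColoring G d k c := by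
  obtain ⟨y_low, y_high, -, -, distance⟩ := hxy
  have range (u : V) : 1 ≤ c u ∧ c u ≤ k :=
    ⟨(h.y_iff u 1).1 (y_low u 1 le_rfl),
      Int.lt_add_one_iff.1 ((h.y_eq_false_iff u (k + 1)).1 (y_high u (k + 1) (lt_add_one k)))⟩
  refine ⟨range, fun u v huv => ?_⟩
  obtain ⟨hlow, hhigh⟩ := range u
  exact (h.distance_clause_iff v (c u) (d u v)).1
    (distance u v huv (c u) hlow hhigh ((h.x_iff u (c u) hlow hhigh).2 rfl))

theorem twoG (h : Represents k x y c) (hc : ValidColoring G d k c) : TwoG G d k x y := by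
  obtain ⟨range, distance⟩ := hc
  refine ⟨fun u j hj => ?low, fun u j hj => ?high, fun u j hj => ?ordering, h.channeling_clause,
    fun u v huv j hj hjk hx => ?distance⟩
  case low => exact (h.y_iff u j).2 (hj.trans (range u).1)
  case high => exact (h.y_eq_false_iff u j).2 ((range u).2.trans_lt hj)
  case ordering => exact (h.y_iff u (j - 1)).2 ((sub_one_lt j).le.trans ((h.y_iff u j).1 hj))
  case distance =>
    obtain rfl := (h.x_iff u j hj hjk).1 hx
    exact (h.distance_clause_iff v (c u) (d u v)).2 (distance u v huv)

end Represents

namespace TwoG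

theorem antitone_y (h : TwoG G d k x y) (u : V) : Antitone (y u) := by
  obtain ⟨-, -, ordering, -, -⟩ := h
  refine antitone_int_of_succ_le fun j hj => ?_
  simpa only [add_sub_cancel_right] using ordering u (j + 1) hj

theorem exists_forall_y_iff_le (h : TwoG G d k x y) (u : V) :
    ∃ m : ℤ, ∀ j, y u j = true ↔ j ≤ m := by
  have lower : IsLowerSet {j | y u j = true} := fun _ _ hij hi => h.antitone_y u hij hi
  obtain ⟨y_low, y_high, -, -, -⟩ := h
  have bddAbove : BddAbove {j | y u j = true} := by
    refine ⟨k, fun j hj => le_of_not_gt fun hkj => ?_⟩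
    exact Bool.false_ne_true ((y_high u j hkj).symm.trans hj)
  obtain ⟨m, hm⟩ := exists_eq_Iic_of_isLowerSet lower ⟨1, y_low u 1 le_rfl⟩ bddAbove
  exact ⟨m, fun j => Set.ext_iff.1 hm j⟩

theorem exists_represents (h : TwoG G d k x y) : ∃ c, Represents k x y c := by
  choose c hc using h.exists_forall_y_iff_le
  obtain ⟨-, -, -, channeling, -⟩ := h
  refine ⟨c, hc, fun u j hj hjk => ?_⟩
  rw [channeling u j hj hjk, ← Bool.not_eq_true, hc, hc]
  omega

theorem existsUnique_x (h : TwoG G d k x y) (u : V) :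
    ∃! j : ℤ, 1 ≤ j ∧ j ≤ k ∧ x u j = true := by
  obtain ⟨c, hc⟩ := h.exists_represents
  obtain ⟨hlow, hhigh⟩ := (hc.validColoring h).1 u
  exact ⟨c u, ⟨hlow, hhigh, (hc.x_iff u _ hlow hhigh).2 rfl⟩,
    fun j ⟨hj, hjk, hx⟩ => (hc.x_iff u j hj hjk).1 hx⟩

theorem validColoring_of_forall_x (h : TwoG G d k x y)
    (hx : ∀ u, 1 ≤ c u ∧ c u ≤ k ∧ x u (c u) = true) : ValidColoring G d k c := by
  obtain ⟨c', hc'⟩ := h.exists_represents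
  obtain rfl : c = c' := funext fun u =>
    (hc'.x_iff u (c u) (hx u).1 (hx u).2.1).1 (hx u).2.2
  exact hc'.validColoring h

end TwoG

theorem exists_validColoring_iff_exists_twoG :
    (∃ c, ValidColoring G d k c) ↔ ∃ x y, TwoG G d k x y := by
  constructor
  · rintro ⟨c, hc⟩
    exact ⟨_, _, (Represents.of_decide k c).twoG hc⟩
  · rintro ⟨x, y, hxy⟩
    obtain ⟨c, hc⟩ := hxy.exists_represents
    exact ⟨c, hc.validColoring hxy⟩

end

theorem correctness_2G_encoding_general {V : Type*} (G : SimpleGraph V) (d : V → V → ℤ) (k : ℤ) :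
    ((∃ c : V → ℤ, ValidColoring G d k c) ↔
      ∃ x y : V → ℤ → Bool, TwoG G d k x y) ∧
    (∀ x y : V → ℤ → Bool, TwoG G d k x y →
      (∀ u : V, ∃! j : ℤ, 1 ≤ j ∧ j ≤ k ∧ x u j = true) ∧
      ∀ c : V → ℤ, (∀ u : V, 1 ≤ c u ∧ c u ≤ k ∧ x u (c u) = true) → ValidColoring G d k c) :=
  ⟨exists_validColoring_iff_exists_twoG, fun _ _ hxy =>
    ⟨hxy.existsUnique_x, fun _ => hxy.validColoring_of_forall_x⟩⟩

theorem correctness_2G_encoding {V : Type*} [Fintype V]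
    (G : SimpleGraph V) (d : V → V → ℤ)
    (hdpos : ∀ u v, G.Adj u v → 1 ≤ d u v)
    (hdsymm : ∀ u v, d u v = d v u)
    (k : ℤ) (hk : 1 ≤ k) :
    ((∃ c : V → ℤ, ValidColoring G d k c) ↔
      ∃ x y : V → ℤ → Bool, TwoG G d k x y) ∧
    (∀ x y : V → ℤ → Bool, TwoG G d k x y →
      ∀ c : V → ℤ,
        (∀ u : V, 1 ≤ c u ∧ c u ≤ k ∧ x u (c u) = true ∧
          (∀ j : ℤ, 1 ≤ j → j ≤ k → x u j = true → j = c u)) →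
        ValidColoring G d k c) := by
  obtain ⟨exists_iff, decode⟩ := correctness_2G_encoding_general G d k
  exact ⟨exists_iff, fun x y hxy c hc => (decode x y hxy).2 c fun u =>
    ⟨(hc u).1, (hc u).2.1, (hc u).2.2.1⟩⟩
end

section
/- Correctness of the 2L (two-variable less-than) SAT encoding: let G be a finite simple graph on vertex set V with symmetric positive integer edge weights d, and let k ≥ 1 be an integer. The following are equivalent: (i) there exists a valid coloring with span bound k; (ii) there exist maps x, y : V → ℤ → Bool satisfying all of: (boundary) y(u,j) = true for every vertex u and every integer j ≥ k, and y(u,j) = false for every j ≤ 0; (ordering) for every vertex u and every integer j, y(u,j) implies y(u,j+1); (channeling) for every vertex u and every integer j with 1 ≤ j ≤ k, x(u,j) holds if and only if y(u,j) ∧ ¬y(u,j−1); (distance) for every ordered pair (u,v) of adjacent vertices and every integer j with 1 ≤ j ≤ k, x(u,j) implies y(v, j−d(u,v)) ∨ ¬y(v, j+d(u,v)−1). Moreover, from any such (x,y) a valid coloring is obtained by setting c(u) equal to the unique j in [1,k] with x(u,j) = true. -/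
/-- The constraints of the 2L (two-variable less-than) encoding with
span bound `k`: boundary, ordering, channeling, and distance clauses. -/
def TwoL {V : Type*} (G : SimpleGraph V) (d : V → V → ℤ) (k : ℤ)
    (x y : V → ℤ → Bool) : Prop :=
  (∀ u : V, ∀ j : ℤ, k ≤ j → y u j = true) ∧
  (∀ u : V, ∀ j : ℤ, j ≤ 0 → y u j = false) ∧
  (∀ u : V, ∀ j : ℤ, y u j = true → y u (j + 1) = true) ∧
  (∀ u : V, ∀ j : ℤ, 1 ≤ j → j ≤ k →
    (x u j = true ↔ (y u j = true ∧ y u (j - 1) = false))) ∧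
  (∀ u v : V, G.Adj u v → ∀ j : ℤ, 1 ≤ j → j ≤ k →
    x u j = true →
      (y v (j - d u v) = true ∨ y v (j + d u v - 1) = false))

/-!
The boundary and ordering clauses say exactly that each `y u` is the step function `j ↦ (t ≤ j)` of
some threshold `t` in `[1, k]`. Once the thresholds `c u` are fixed, the channeling clauses say that
`x u` is the indicator of `c u` on `[1, k]`, and the distance clause at `j = c u` reads
`c v ≤ c u - d u v` or `c u + d u v ≤ c v`, that is, `d u v ≤ |c u - c v|`.
-/

/-- `f` is the step function that jumps from `false` to `true` at `t`. In an order encoding, such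
an `f` represents the integer `t` by the truth values of the comparisons `t ≤ j`. -/
def IsThreshold (f : ℤ → Bool) (t : ℤ) : Prop :=
  ∀ j, f j = true ↔ t ≤ j

theorem isThreshold_decide_le (t : ℤ) : IsThreshold (fun j => decide (t ≤ j)) t :=
  fun _ => decide_eq_true_iff

theorem exists_isThreshold_of_monotone {f : ℤ → Bool} (hf : Monotone f) {a b : ℤ}
    (ha : f a = false) (hb : f b = true) : ∃ t, IsThreshold f t := by
  have lower_bound : ∀ j, f j = true → a ≤ j := fun j hj => by
    by_contra! hja
    exact Bool.false_ne_true (ha.symm.trans (Bool.le_iff_imp.1 (hf hja.le) hj))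
  obtain ⟨t, ht, ht_least⟩ := Int.exists_least_of_bdd ⟨a, lower_bound⟩ ⟨b, hb⟩
  exact ⟨t, fun j => ⟨ht_least j, fun htj => Bool.le_iff_imp.1 (hf htj) ht⟩⟩

namespace IsThreshold

variable {f : ℤ → Bool} {t : ℤ}

theorem eq_false_iff (hf : IsThreshold f t) (j : ℤ) : f j = false ↔ j < t := by
  rw [← Bool.not_eq_true, hf j, not_le]

theorem forall_ge_eq_true_iff (hf : IsThreshold f t) (k : ℤ) :
    (∀ j, k ≤ j → f j = true) ↔ t ≤ k :=
  ⟨fun h => (hf k).1 (h k le_rfl), fun htk j hkj => (hf j).2 (htk.trans hkj)⟩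

theorem forall_le_eq_false_iff (hf : IsThreshold f t) (k : ℤ) :
    (∀ j, j ≤ k → f j = false) ↔ k < t :=
  ⟨fun h => (hf.eq_false_iff k).1 (h k le_rfl),
    fun hkt j hjk => (hf.eq_false_iff j).2 (hjk.trans_lt hkt)⟩

theorem eq_true_add_one (hf : IsThreshold f t) {j : ℤ} (hj : f j = true) : f (j + 1) = true :=
  (hf _).2 (Int.le_add_one ((hf j).1 hj))

theorem eq_true_and_sub_one_eq_false_iff (hf : IsThreshold f t) (j : ℤ) :
    f j = true ∧ f (j - 1) = false ↔ j = t := by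
  rw [hf j, hf.eq_false_iff]
  omega

theorem sub_eq_true_or_add_sub_one_eq_false_iff (hf : IsThreshold f t) (j r : ℤ) :
    f (j - r) = true ∨ f (j + r - 1) = false ↔ r ≤ |j - t| := by
  rw [hf, hf.eq_false_iff, le_abs]
  omega

end IsThreshold

section Encoding

variable {V : Type*} {G : SimpleGraph V} {d : V → V → ℤ} {k : ℤ} {c : V → ℤ} {x y : V → ℤ → Bool}

theorem TwoL.exists_isThreshold (h : TwoL G d k x y) (u : V) : ∃ t, IsThreshold (y u) t := by
  obtain ⟨true_of_ge, false_of_nonpos, ordering, -, -⟩ := h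
  have y_mono : Monotone (y u) :=
    monotone_int_of_le_succ fun j => Bool.le_iff_imp.2 (ordering u j)
  exact exists_isThreshold_of_monotone y_mono (false_of_nonpos u 0 le_rfl) (true_of_ge u k le_rfl)

theorem TwoL.validColoring_of_isThreshold (h : TwoL G d k x y)
    (hy : ∀ u, IsThreshold (y u) (c u)) : ValidColoring G d k c := by
  obtain ⟨true_of_ge, false_of_nonpos, -, channeling, distance⟩ := h
  have c_mem : ∀ u, 1 ≤ c u ∧ c u ≤ k := fun u =>
    ⟨((hy u).forall_le_eq_false_iff 0).1 (false_of_nonpos u),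
      ((hy u).forall_ge_eq_true_iff k).1 (true_of_ge u)⟩
  refine ⟨c_mem, fun u v huv => ?_⟩
  obtain ⟨one_le, le_k⟩ := c_mem u
  have x_c : x u (c u) = true :=
    (channeling u _ one_le le_k).2 (((hy u).eq_true_and_sub_one_eq_false_iff _).2 rfl)
  exact ((hy v).sub_eq_true_or_add_sub_one_eq_false_iff _ _).1
    (distance u v huv _ one_le le_k x_c)

theorem TwoL.eq_true_iff_of_isThreshold (h : TwoL G d k x y) {u : V} {t j : ℤ}
    (hy : IsThreshold (y u) t) (hj : 1 ≤ j) (hjk : j ≤ k) : x u j = true ↔ j = t :=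
  (h.2.2.2.1 u j hj hjk).trans (hy.eq_true_and_sub_one_eq_false_iff j)

theorem ValidColoring.twoL_of_isThreshold (hc : ValidColoring G d k c)
    (hy : ∀ u, IsThreshold (y u) (c u))
    (hx : ∀ u j, 1 ≤ j → j ≤ k → (x u j = true ↔ j = c u)) : TwoL G d k x y := by
  obtain ⟨c_mem, c_dist⟩ := hc
  refine ⟨fun u => ((hy u).forall_ge_eq_true_iff k).2 (c_mem u).2,
    fun u => ((hy u).forall_le_eq_false_iff 0).2 (c_mem u).1,
    fun u _ => (hy u).eq_true_add_one,
    fun u j hj hjk => (hx u j hj hjk).trans ((hy u).eq_true_and_sub_one_eq_false_iff j).symm,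
    fun u v huv j hj hjk hxj => ?_⟩
  obtain rfl : j = c u := (hx u j hj hjk).1 hxj
  exact ((hy v).sub_eq_true_or_add_sub_one_eq_false_iff _ _).2 (c_dist u v huv)

theorem twoL_iff_exists_validColoring :
    TwoL G d k x y ↔ ∃ c, ValidColoring G d k c ∧ (∀ u, IsThreshold (y u) (c u)) ∧
      ∀ u j, 1 ≤ j → j ≤ k → (x u j = true ↔ j = c u) := by
  constructor
  · intro h
    choose c hy using h.exists_isThreshold
    exact ⟨c, h.validColoring_of_isThreshold hy, hy,
      fun u _ => h.eq_true_iff_of_isThreshold (hy u)⟩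
  · rintro ⟨c, hc, hy, hx⟩
    exact hc.twoL_of_isThreshold hy hx

theorem TwoL.existsUnique_eq_true (h : TwoL G d k x y) (u : V) :
    ∃! j, 1 ≤ j ∧ j ≤ k ∧ x u j = true := by
  obtain ⟨c, ⟨c_mem, -⟩, -, hx⟩ := twoL_iff_exists_validColoring.1 h
  obtain ⟨one_le, le_k⟩ := c_mem u
  exact ⟨c u, ⟨one_le, le_k, (hx u _ one_le le_k).2 rfl⟩,
    fun j ⟨hj, hjk, hxj⟩ => (hx u j hj hjk).1 hxj⟩

theorem TwoL.validColoring_of_eq_true (h : TwoL G d k x y)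
    (hc : ∀ u, 1 ≤ c u ∧ c u ≤ k ∧ x u (c u) = true) : ValidColoring G d k c := by
  obtain ⟨c', hc', -, hx⟩ := twoL_iff_exists_validColoring.1 h
  obtain rfl : c = c' := funext fun u =>
    let ⟨one_le, le_k, x_c⟩ := hc u
    (hx u _ one_le le_k).1 x_c
  exact hc'

theorem exists_validColoring_iff_exists_twoL :
    (∃ c, ValidColoring G d k c) ↔ ∃ x y, TwoL G d k x y := by
  constructor
  · rintro ⟨c, hc⟩
    exact ⟨fun u j => decide (j = c u), fun u j => decide (c u ≤ j),
      hc.twoL_of_isThreshold (fun u => isThreshold_decide_le (c u))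
        fun _ _ _ _ => decide_eq_true_iff⟩
  · rintro ⟨x, y, h⟩
    obtain ⟨c, hc, -⟩ := twoL_iff_exists_validColoring.1 h
    exact ⟨c, hc⟩

end Encoding

theorem correctness_2L_encoding_general {V : Type*} (G : SimpleGraph V) (d : V → V → ℤ) (k : ℤ) :
    ((∃ c : V → ℤ, ValidColoring G d k c) ↔ ∃ x y : V → ℤ → Bool, TwoL G d k x y) ∧
    ∀ x y : V → ℤ → Bool, TwoL G d k x y →
      (∀ u, ∃! j, 1 ≤ j ∧ j ≤ k ∧ x u j = true) ∧
      ∀ c : V → ℤ, (∀ u, 1 ≤ c u ∧ c u ≤ k ∧ x u (c u) = true) → ValidColoring G d k c :=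
  ⟨exists_validColoring_iff_exists_twoL,
    fun _ _ h => ⟨h.existsUnique_eq_true, fun _ => h.validColoring_of_eq_true⟩⟩

theorem correctness_2L_encoding {V : Type*} [Fintype V]
    (G : SimpleGraph V) (d : V → V → ℤ)
    (hdpos : ∀ u v, G.Adj u v → 1 ≤ d u v)
    (hdsymm : ∀ u v, d u v = d v u)
    (k : ℤ) (hk : 1 ≤ k) :
    ((∃ c : V → ℤ, ValidColoring G d k c) ↔
      ∃ x y : V → ℤ → Bool, TwoL G d k x y) ∧
    (∀ x y : V → ℤ → Bool, TwoL G d k x y →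
      ∀ c : V → ℤ,
        (∀ u : V, 1 ≤ c u ∧ c u ≤ k ∧ x u (c u) = true ∧
          (∀ j : ℤ, 1 ≤ j → j ≤ k → x u j = true → j = c u)) →
        ValidColoring G d k c) := by
  obtain ⟨exists_iff, decode⟩ := correctness_2L_encoding_general G d k
  exact ⟨exists_iff, fun x y h c hc => (decode x y h).2 c fun u =>
    ⟨(hc u).1, (hc u).2.1, (hc u).2.2.1⟩⟩
end

section
/- Window characterization of the distance constraint: for all integers a, b and every positive integer d, the inequality |a − b| ≥ d holds if and only if there is no integer c such that both a and b lie in the window [c, c + d − 1] (that is, c ≤ a ≤ c + d − 1 and c ≤ b ≤ c + d − 1). -/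
theorem mem_Ico_and_mem_Ico_iff {α : Type*} [LinearOrder α] {a b s t : α} :
    a ∈ Set.Ico s t ∧ b ∈ Set.Ico s t ↔ s ≤ min a b ∧ max a b < t := by
  rw [Set.mem_Ico, Set.mem_Ico, le_min_iff, max_lt_iff, and_and_and_comm]

section LinearOrderedAddCommGroup

variable {α : Type*} [AddCommGroup α] [LinearOrder α] [IsOrderedAddMonoid α]

theorem exists_mem_Ico_and_mem_Ico_iff_abs_sub_lt {a b d : α} :
    (∃ c, a ∈ Set.Ico c (c + d) ∧ b ∈ Set.Ico c (c + d)) ↔ |a - b| < d := by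
  -- If some window contains both points, so does the one starting at `min a b`.
  calc (∃ c, a ∈ Set.Ico c (c + d) ∧ b ∈ Set.Ico c (c + d))
      ↔ ∃ c ≤ min a b, max a b < c + d := by simp only [mem_Ico_and_mem_Ico_iff]
    _ ↔ max a b < min a b + d :=
        ⟨fun ⟨_, hc, hlt⟩ ↦ hlt.trans_le (add_le_add_left hc d), fun hlt ↦ ⟨_, le_rfl, hlt⟩⟩
    _ ↔ |a - b| < d := by rw [← sub_lt_iff_lt_add', max_sub_min_eq_abs']

theorem distance_window_characterization_general (a b d : α) :
    |a - b| ≥ d ↔ ¬ ∃ c, a ∈ Set.Ico c (c + d) ∧ b ∈ Set.Ico c (c + d) := by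
  rw [exists_mem_Ico_and_mem_Ico_iff_abs_sub_lt, not_lt, ge_iff_le]

end LinearOrderedAddCommGroup

/-- Window characterization of the distance constraint: `|a - b| ≥ d`
holds iff no length-`d` window `[c, c + d - 1]` contains both `a` and `b`. -/
theorem distance_window_characterization (a b d : ℤ) (hd : 1 ≤ d) :
    |a - b| ≥ d ↔
      ¬ ∃ c : ℤ, (c ≤ a ∧ a ≤ c + d - 1) ∧ (c ≤ b ∧ b ≤ c + d - 1) := by
  simpa only [Set.mem_Ico, Int.le_sub_one_iff] using distance_window_characterization_general a b d
end

section
/- Block-encoding range sum inside a block via subtraction (Case 3, backward chain): let f : ℤ → ℕ take only the values 0 and 1, let s ≤ c and c + d − 1 ≤ e be integers (so the range [c, c+d−1] is contained in the block [s,e]), and assume Σ_{i=s}^{e} f(i) ≤ 1. Define the range variables R(a,b) as the Boolean that is true exactly when Σ_{i=a}^{b} f(i) = 1. Then Σ_{i=c}^{c+d−1} f(i) = toNat(R(c,e)) − toNat(R(c+d, e)), and moreover R(c+d,e) = true implies R(c,e) = true (so the subtraction never truncates). -/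
/-- The range variable `R f a b` of the block encoding: true exactly when
the 0/1 function `f` sums to `1` over the integer range `[a, b]`. -/
noncomputable def RangeVar (f : ℤ → ℕ) (a b : ℤ) : Bool :=
  decide (∑ i ∈ Finset.Icc a b, f i = 1)

theorem sum_Ico_add_sum_Ico {α M : Type*} [LinearOrder α] [LocallyFiniteOrder α]
    [AddCommMonoid M] (f : α → M) {a b c : α} (hab : a ≤ b) (hbc : b ≤ c) :
    ∑ i ∈ Finset.Ico a b, f i + ∑ i ∈ Finset.Ico b c, f i = ∑ i ∈ Finset.Ico a c, f i := by
  rw [← Finset.sum_union (Finset.Ico_disjoint_Ico_consecutive a b c),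
    Finset.Ico_union_Ico_eq_Ico hab hbc]

theorem sum_Icc_sub_one_add_sum_Icc {M : Type*} [AddCommMonoid M] (f : ℤ → M) {a b c : ℤ}
    (hab : a ≤ b) (hbc : b - 1 ≤ c) :
    ∑ i ∈ Finset.Icc a (b - 1), f i + ∑ i ∈ Finset.Icc b c, f i = ∑ i ∈ Finset.Icc a c, f i := by
  simpa only [Finset.Icc_sub_one_right_eq_Ico, Finset.Ico_add_one_right_eq_Icc] using
    sum_Ico_add_sum_Ico f hab (sub_le_iff_le_add.mp hbc)

namespace RangeVar

variable {f : ℤ → ℕ} {a b a' b' : ℤ}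

theorem eq_true_iff : RangeVar f a b = true ↔ ∑ i ∈ Finset.Icc a b, f i = 1 :=
  decide_eq_true_iff

theorem toNat_eq_sum (hsum : ∑ i ∈ Finset.Icc a b, f i ≤ 1) :
    (RangeVar f a b).toNat = ∑ i ∈ Finset.Icc a b, f i := by
  rcases Nat.le_one_iff_eq_zero_or_eq_one.mp hsum with hzero | hone
  · simp [RangeVar, hzero]
  · simp [RangeVar, hone]

theorem eq_true_of_Icc_subset (hsub : Finset.Icc a b ⊆ Finset.Icc a' b')
    (hsum : ∑ i ∈ Finset.Icc a' b', f i ≤ 1) (hR : RangeVar f a b = true) :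
    RangeVar f a' b' = true :=
  eq_true_iff.mpr <| hsum.antisymm <|
    (eq_true_iff.mp hR).ge.trans (Finset.sum_le_sum_of_subset hsub)

end RangeVar

/-- Block-encoding range sum inside a block via subtraction (Case 3,
backward chain): if the range `[c, c + d - 1]` (with `d ≥ 1`) is contained
in the block `[s, e]`, over which `f` sums to at most `1`, then the range
sum equals `toNat (R(c, e)) - toNat (R(c + d, e))`, and `R(c + d, e)`
implies `R(c, e)`, so the subtraction never truncates. -/
theorem block_range_sum_subtraction (f : ℤ → ℕ)
    (hf : ∀ i, f i = 0 ∨ f i = 1)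
    (s c d e : ℤ) (hd : 1 ≤ d) (hsc : s ≤ c) (hde : c + d - 1 ≤ e)
    (hblock : ∑ i ∈ Finset.Icc s e, f i ≤ 1) :
    (∑ i ∈ Finset.Icc c (c + d - 1), f i
        = (RangeVar f c e).toNat - (RangeVar f (c + d) e).toNat) ∧
    (RangeVar f (c + d) e = true → RangeVar f c e = true) := by
  have hcd : c ≤ c + d := by lia
  have hsub : Finset.Icc (c + d) e ⊆ Finset.Icc c e := Finset.Icc_subset_Icc_left hcd
  have hsum : ∑ i ∈ Finset.Icc c e, f i ≤ 1 :=
    (Finset.sum_le_sum_of_subset (Finset.Icc_subset_Icc_left hsc)).trans hblock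
  have htail : ∑ i ∈ Finset.Icc (c + d) e, f i ≤ 1 :=
    (Finset.sum_le_sum_of_subset hsub).trans hsum
  refine ⟨?_, RangeVar.eq_true_of_Icc_subset hsub hsum⟩
  rw [RangeVar.toNat_eq_sum hsum, RangeVar.toNat_eq_sum htail]
  exact Nat.eq_sub_of_add_eq (sum_Icc_sub_one_add_sum_Icc f hcd hde)
end
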